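/- Let 𝒜 be a C*-algebra with a dense *-subalgebra 𝒟. If the Lebesgue decomposition of representable positive functionals over 𝒟 is unique, then the Lebesgue decomposition of positive functionals over 𝒜 is unique. -/

import Mathlib

open scoped ComplexOrder InnerProductSpace

section StarAlgebraDefs

variable {A : Type} [NonUnitalRing A] [Module ℂ A] [SMulCommClass ℂ A A]
  [IsScalarTower ℂ A A] [StarRing A] [StarModule ℂ A]

/-- A linear functional on a `⋆`-algebra is positive if `0 ≤ f (a⋆ * a)` for every `a`. -/
def IsPosFn (f : A →ₗ[ℂ] ℂ) : Prop := ∀ a : A, 0 ≤ f (star a * a)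

/-- Order on positive functionals: `f ≤ g` iff `g - f` is positive. -/
def FnLE (f g : A →ₗ[ℂ] ℂ) : Prop := IsPosFn (g - f)

/-- `f` is induced by a `⋆`-representation on the Hilbert space `H` with a cyclic vector. -/
def IsRepOn (f : A →ₗ[ℂ] ℂ) (H : Type) [NormedAddCommGroup H]
    [InnerProductSpace ℂ H] [CompleteSpace H] : Prop :=
  ∃ (π : A →⋆ₙₐ[ℂ] (H →L[ℂ] H)) (ξ : H),
    DenseRange (fun a : A => π a ξ) ∧ ∀ a : A, f a = ⟪ξ, π a ξ⟫_ℂ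

/-- A positive linear functional is representable if it is induced by a cyclic
`⋆`-representation on some complex Hilbert space. -/
def IsRepresentable (f : A →ₗ[ℂ] ℂ) : Prop :=
  ∃ (H : Type) (_ : NormedAddCommGroup H) (_ : InnerProductSpace ℂ H) (_ : CompleteSpace H),
    IsRepOn f H

/-- Absolute continuity `f ≪ g` for representable positive functionals: `f` is the pointwise
limit of an increasing sequence of representable positive functionals `fₙ` with
`fₙ ≤ αₙ • g` for some positive reals `αₙ`. -/
def AbsContR (f g : A →ₗ[ℂ] ℂ) : Prop :=
  ∃ (fn : ℕ → (A →ₗ[ℂ] ℂ)) (α : ℕ → ℝ),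
    (∀ n, IsRepresentable (fn n) ∧ IsPosFn (fn n)) ∧
    (∀ n, 0 < α n) ∧
    (∀ n, FnLE (fn n) (fn (n + 1))) ∧
    (∀ n, FnLE (fn n) (((α n : ℂ)) • g)) ∧
    (∀ a : A, Filter.Tendsto (fun n => fn n a) Filter.atTop (nhds (f a)))

/-- Singularity `f ⊥ g` for representable positive functionals: the only representable
positive functional dominated by both `f` and `g` is `0`. -/
def SingularR (f g : A →ₗ[ℂ] ℂ) : Prop :=
  ∀ p : A →ₗ[ℂ] ℂ, IsRepresentable p → IsPosFn p → FnLE p f → FnLE p g → p = 0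

/-- `f = fr + fs` is a Lebesgue decomposition of `f` with respect to `g` (representable
positive functionals). -/
def IsLebDecompR (f g fr fs : A →ₗ[ℂ] ℂ) : Prop :=
  IsRepresentable fr ∧ IsPosFn fr ∧ IsRepresentable fs ∧ IsPosFn fs ∧
    f = fr + fs ∧ AbsContR fr g ∧ SingularR fs g

/-- The Lebesgue decomposition of `f` with respect to `g` is unique. -/
def LebDecompUniqueForR (f g : A →ₗ[ℂ] ℂ) : Prop :=
  ∀ fr fs fr' fs' : A →ₗ[ℂ] ℂ, IsLebDecompR f g fr fs → IsLebDecompR f g fr' fs' →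
    fr = fr' ∧ fs = fs'

end StarAlgebraDefs

/-- The Lebesgue decomposition of representable positive functionals over `A` is unique. -/
def LebDecompUniqueR (A : Type) [NonUnitalRing A] [Module ℂ A] [SMulCommClass ℂ A A]
    [IsScalarTower ℂ A A] [StarRing A] [StarModule ℂ A] : Prop :=
  ∀ f g : A →ₗ[ℂ] ℂ, IsRepresentable f → IsPosFn f → IsRepresentable g → IsPosFn g →
    LebDecompUniqueForR f g

section CStarDefs

variable {A : Type} [NonUnitalCStarAlgebra A]

/-- A linear functional on a C⋆-algebra is positive if `0 ≤ f (a⋆ * a)` for every `a`. -/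
def IsPosFnC (f : A →ₗ[ℂ] ℂ) : Prop := ∀ a : A, 0 ≤ f (star a * a)

/-- Order on positive functionals: `f ≤ g` iff `g - f` is positive. -/
def FnLEC (f g : A →ₗ[ℂ] ℂ) : Prop := IsPosFnC (g - f)

/-- Absolute continuity `f ≪ g` for positive functionals on a C⋆-algebra: `f` is the
pointwise limit of an increasing sequence of positive functionals `fₙ` with `fₙ ≤ αₙ • g`
for some positive reals `αₙ`. -/
def AbsContC (f g : A →ₗ[ℂ] ℂ) : Prop :=
  ∃ (fn : ℕ → (A →ₗ[ℂ] ℂ)) (α : ℕ → ℝ),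
    (∀ n, IsPosFnC (fn n)) ∧
    (∀ n, 0 < α n) ∧
    (∀ n, FnLEC (fn n) (fn (n + 1))) ∧
    (∀ n, FnLEC (fn n) (((α n : ℂ)) • g)) ∧
    (∀ a : A, Filter.Tendsto (fun n => fn n a) Filter.atTop (nhds (f a)))

/-- Singularity `f ⊥ g`: the only positive functional dominated by both `f` and `g`
is `0`. -/
def SingularC (f g : A →ₗ[ℂ] ℂ) : Prop :=
  ∀ p : A →ₗ[ℂ] ℂ, IsPosFnC p → FnLEC p f → FnLEC p g → p = 0

/-- `f = fr + fs` is a Lebesgue decomposition of `f` with respect to `g`. -/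
def IsLebDecompC (f g fr fs : A →ₗ[ℂ] ℂ) : Prop :=
  IsPosFnC fr ∧ IsPosFnC fs ∧ f = fr + fs ∧ AbsContC fr g ∧ SingularC fs g

/-- The Lebesgue decomposition of `f` with respect to `g` is unique. -/
def LebDecompUniqueForC (f g : A →ₗ[ℂ] ℂ) : Prop :=
  ∀ fr fs fr' fs' : A →ₗ[ℂ] ℂ, IsLebDecompC f g fr fs → IsLebDecompC f g fr' fs' →
    fr = fr' ∧ fs = fs'

end CStarDefs

/-- The Lebesgue decomposition of positive functionals over the C⋆-algebra `A` is unique. -/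
def LebDecompUniqueC (A : Type) [NonUnitalCStarAlgebra A] : Prop :=
  ∀ f g : A →ₗ[ℂ] ℂ, IsPosFnC f → IsPosFnC g → LebDecompUniqueForC f g

/-!
Restriction to `𝒟` carries a Lebesgue decomposition over `𝒜` to one over `𝒟`, and a continuous
functional on `𝒜` is determined by its restriction. Restrictions are representable because, along
an approximate unit, a positive functional `f` on `𝒜` satisfies `|f(a)|² ≤ C f(a⋆a)`, so that it is
represented by a vector of its GNS space. Singularity survives because a representable `p` on `𝒟`
below `f|𝒟` satisfies `|p(d)|² ≤ C p(d⋆d) ≤ C f(d⋆d) ≤ C‖f‖‖d‖²`, and hence extends to a positive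
functional on `𝒜`. Nothing changes if the inclusion `𝒟 → 𝒜` is replaced by any `⋆`-homomorphism
with dense range.
-/

section GNS

open Filter UniformSpace

variable {A : Type*} [NonUnitalCStarAlgebra A] [PartialOrder A] [StarOrderedRing A]
  (f : A →ₚ[ℂ] ℂ)

/-- The canonical linear map from a C⋆-algebra to the GNS Hilbert space of a positive functional,
sending `a` to the class `[a]`. -/
noncomputable def gnsMk : A →ₗ[ℂ] f.GNS :=
  (Completion.toComplL (𝕜 := ℂ) (E := f.PreGNS)).toLinearMap ∘ₗ f.toPreGNS.toLinearMap

lemma denseRange_gnsMk : DenseRange (gnsMk f) :=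
  Completion.denseRange_coe (α := f.PreGNS)

lemma inner_gnsMk_gnsMk (a b : A) : ⟪gnsMk f a, gnsMk f b⟫_ℂ = f (star a * b) :=
  Completion.inner_coe (𝕜 := ℂ) (f.toPreGNS a) (f.toPreGNS b)

lemma norm_gnsMk (a : A) : ‖gnsMk f a‖ = √(f (star a * a)).re :=
  Completion.norm_coe (f.toPreGNS a)

lemma gnsNonUnitalStarAlgHom_gnsMk (a b : A) :
    f.gnsNonUnitalStarAlgHom a (gnsMk f b) = gnsMk f (a * b) :=
  f.gnsNonUnitalStarAlgHom_apply_coe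

lemma exists_norm_gnsMk_le : ∃ C : ℝ, 0 ≤ C ∧ ∀ a, ‖gnsMk f a‖ ≤ C * ‖a‖ := by
  obtain ⟨C, hC⟩ := f.exists_norm_apply_le
  refine ⟨√C, by positivity, fun a ↦ ?_⟩
  calc ‖gnsMk f a‖ = √(f (star a * a)).re := norm_gnsMk f a
    _ ≤ √(C * ‖star a * a‖) := Real.sqrt_le_sqrt ((Complex.re_le_norm _).trans (hC _))
    _ = √C * ‖a‖ := by
      rw [CStarRing.norm_star_mul_self, Real.sqrt_mul C.coe_nonneg,
        Real.sqrt_mul_self (norm_nonneg a)]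

lemma exists_norm_apply_le_norm_gnsMk : ∃ C : ℝ, ∀ a, ‖f a‖ ≤ C * ‖gnsMk f a‖ := by
  obtain ⟨C, hC₀, hC⟩ := exists_norm_gnsMk_le f
  refine ⟨C, fun a ↦ ?_⟩
  have approx_unit := CStarAlgebra.increasingApproximateUnit A
  have tendsto_apply : Tendsto (fun e ↦ ‖f (e * a)‖) (CStarAlgebra.approximateUnit A)
      (nhds ‖f a‖) :=
    (((map_continuous f).tendsto a).comp (approx_unit.tendsto_mul_right a)).norm
  refine le_of_tendsto tendsto_apply ?_
  filter_upwards [approx_unit.eventually_star_eq, approx_unit.eventually_norm]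
    with e he_star he_norm
  calc ‖f (e * a)‖ = ‖⟪gnsMk f e, gnsMk f a⟫_ℂ‖ := by rw [inner_gnsMk_gnsMk, he_star]
    _ ≤ ‖gnsMk f e‖ * ‖gnsMk f a‖ := norm_inner_le_norm _ _
    _ ≤ C * ‖gnsMk f a‖ := by
      gcongr
      exact (hC e).trans (mul_le_of_le_one_right hC₀ he_norm)

lemma exists_apply_eq_inner_gnsMk : ∃ ξ : f.GNS, ∀ a, f a = ⟪ξ, gnsMk f a⟫_ℂ := by
  refine ⟨(InnerProductSpace.toDual ℂ f.GNS).symm (f.toLinearMap.extendOfNorm (gnsMk f)),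
    fun a ↦ ?_⟩
  rw [InnerProductSpace.toDual_symm_apply]
  exact (LinearMap.extendOfNorm_eq (denseRange_gnsMk f) (exists_norm_apply_le_norm_gnsMk f) a).symm

lemma gnsNonUnitalStarAlgHom_apply_eq_gnsMk {ξ : f.GNS} (hξ : ∀ a, f a = ⟪ξ, gnsMk f a⟫_ℂ)
    (a : A) : f.gnsNonUnitalStarAlgHom a ξ = gnsMk f a := by
  refine (denseRange_gnsMk f).eq_of_inner_left ℂ fun b ↦ ?_
  rw [← ContinuousLinearMap.adjoint_inner_right, ← ContinuousLinearMap.star_eq_adjoint, ← map_star,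
    gnsNonUnitalStarAlgHom_gnsMk, ← hξ, inner_gnsMk_gnsMk]

end GNS

section PositiveFunctional

variable {A : Type} [NonUnitalCStarAlgebra A] {f : A →ₗ[ℂ] ℂ}

lemma IsPosFnC.exists_positiveLinearMap_eq [PartialOrder A] [StarOrderedRing A]
    (hf : IsPosFnC f) : ∃ F : A →ₚ[ℂ] ℂ, F.toLinearMap = f :=
  ⟨.mk₀ f fun a ha ↦ by
    obtain ⟨b, rfl⟩ := CStarAlgebra.nonneg_iff_eq_star_mul_self.mp ha
    exact hf b, rfl⟩

lemma IsPosFnC.continuous (hf : IsPosFnC f) : Continuous f := by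
  let _ := CStarAlgebra.spectralOrder A
  have := CStarAlgebra.spectralOrderedRing A
  obtain ⟨F, rfl⟩ := hf.exists_positiveLinearMap_eq
  exact map_continuous F

lemma IsPosFnC.eq_of_comp_eq {g : A →ₗ[ℂ] ℂ} {ι : Type*} {φ : ι → A} (hφ : DenseRange φ)
    (hf : IsPosFnC f) (hg : IsPosFnC g) (h : f ∘ φ = g ∘ φ) : f = g :=
  DFunLike.coe_injective (hφ.equalizer hf.continuous hg.continuous h)

theorem IsPosFnC.isRepresentable (hf : IsPosFnC f) : IsRepresentable f := by
  let _ := CStarAlgebra.spectralOrder A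
  have := CStarAlgebra.spectralOrderedRing A
  obtain ⟨F, rfl⟩ := hf.exists_positiveLinearMap_eq
  obtain ⟨ξ, hξ⟩ := exists_apply_eq_inner_gnsMk F
  have orbit := gnsNonUnitalStarAlgHom_apply_eq_gnsMk F hξ
  refine ⟨F.GNS, inferInstance, inferInstance, inferInstance, F.gnsNonUnitalStarAlgHom, ξ, ?_,
    fun a ↦ ?_⟩
  · simpa only [orbit] using denseRange_gnsMk F
  · rw [orbit]
    exact hξ a

end PositiveFunctional

section DenseHom

variable {A : Type} [NonUnitalCStarAlgebra A] {D : Type} [NonUnitalRing D] [Module ℂ D] [StarRing D]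
  {φ : D →⋆ₙₐ[ℂ] A} {f g : A →ₗ[ℂ] ℂ} {p : D →ₗ[ℂ] ℂ}

lemma IsPosFnC.isPosFn_comp (hf : IsPosFnC f) (φ : D →⋆ₙₐ[ℂ] A) :
    IsPosFn (f ∘ₗ (φ : D →ₗ[ℂ] A)) := fun d ↦ by
  simpa [map_star] using hf (φ d)

lemma IsPosFnC.of_comp (hφ : DenseRange φ) (hf : Continuous f)
    (h : IsPosFn (f ∘ₗ (φ : D →ₗ[ℂ] A))) : IsPosFnC f := fun a ↦
  hφ.induction_on a (isClosed_le continuous_const (hf.comp (by fun_prop)))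
    fun d ↦ by simpa [map_star] using h d

open scoped CStarAlgebra in
lemma IsRepresentable.comp (hf : IsRepresentable f) (hφ : DenseRange φ) :
    IsRepresentable (f ∘ₗ (φ : D →ₗ[ℂ] A)) := by
  obtain ⟨H, _, _, _, π, ξ, hξ, hfξ⟩ := hf
  have continuous_orbit : Continuous fun a ↦ π a ξ := (map_continuous π).clm_apply continuous_const
  exact ⟨H, _, _, inferInstance, π.comp φ, ξ, hξ.comp hφ continuous_orbit, fun d ↦ hfξ (φ d)⟩

lemma IsRepresentable.exists_norm_apply_le (hp : IsRepresentable p) :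
    ∃ C : ℝ, 0 ≤ C ∧ ∀ d, ‖p d‖ ≤ C * √(p (star d * d)).re := by
  obtain ⟨H, _, _, _, π, ξ, -, hpξ⟩ := hp
  refine ⟨‖ξ‖, norm_nonneg ξ, fun d ↦ ?_⟩
  have norm_orbit : √(p (star d * d)).re = ‖π d ξ‖ := by
    rw [hpξ, map_mul, map_star, ContinuousLinearMap.star_eq_adjoint,
      mul_apply_eq_comp, ContinuousLinearMap.adjoint_inner_right,
      norm_eq_sqrt_re_inner (𝕜 := ℂ)]
    rfl
  rw [norm_orbit, hpξ]
  exact norm_inner_le_norm _ _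

lemma IsRepresentable.exists_norm_apply_le_of_fnLE (hp : IsRepresentable p) (hf : Continuous f)
    (hpf : FnLE p (f ∘ₗ (φ : D →ₗ[ℂ] A))) : ∃ C : ℝ, ∀ d, ‖p d‖ ≤ C * ‖φ d‖ := by
  obtain ⟨C, hC₀, hC⟩ := hp.exists_norm_apply_le
  let F : A →L[ℂ] ℂ := ⟨f, hf⟩
  have apply_star_mul_self_le (d : D) : (p (star d * d)).re ≤ ‖F‖ * (‖φ d‖ * ‖φ d‖) :=
    calc (p (star d * d)).re ≤ (f (φ (star d * d))).re := (sub_nonneg.mp (hpf d)).1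
      _ ≤ ‖F (φ (star d * d))‖ := Complex.re_le_norm _
      _ ≤ ‖F‖ * ‖φ (star d * d)‖ := F.le_opNorm _
      _ = ‖F‖ * (‖φ d‖ * ‖φ d‖) := by rw [map_mul, map_star, CStarRing.norm_star_mul_self]
  refine ⟨C * √‖F‖, fun d ↦ ?_⟩
  calc ‖p d‖ ≤ C * √(p (star d * d)).re := hC d
    _ ≤ C * √(‖F‖ * (‖φ d‖ * ‖φ d‖)) := by gcongr; exact apply_star_mul_self_le d
    _ = C * √‖F‖ * ‖φ d‖ := by
      rw [Real.sqrt_mul (norm_nonneg F), Real.sqrt_mul_self (norm_nonneg _), mul_assoc]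

lemma IsRepresentable.exists_continuous_comp_eq (hp : IsRepresentable p) (hφ : DenseRange φ)
    (hf : Continuous f) (hpf : FnLE p (f ∘ₗ (φ : D →ₗ[ℂ] A))) :
    ∃ P : A →ₗ[ℂ] ℂ, Continuous P ∧ P ∘ₗ (φ : D →ₗ[ℂ] A) = p :=
  ⟨p.extendOfNorm (φ : D →ₗ[ℂ] A), ContinuousLinearMap.continuous _, LinearMap.ext fun d ↦
    LinearMap.extendOfNorm_eq (e := (φ : D →ₗ[ℂ] A)) hφ (hp.exists_norm_apply_le_of_fnLE hf hpf) d⟩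

lemma AbsContC.absContR_comp (h : AbsContC f g) (hφ : DenseRange φ) :
    AbsContR (f ∘ₗ (φ : D →ₗ[ℂ] A)) (g ∘ₗ (φ : D →ₗ[ℂ] A)) := by
  obtain ⟨fn, α, pos, α_pos, mono, le, tendsto⟩ := h
  exact ⟨fun n ↦ fn n ∘ₗ (φ : D →ₗ[ℂ] A), α,
    fun n ↦ ⟨(pos n).isRepresentable.comp hφ, (pos n).isPosFn_comp φ⟩, α_pos,
    fun n ↦ (mono n).isPosFn_comp φ, fun n ↦ (le n).isPosFn_comp φ, fun d ↦ tendsto (φ d)⟩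

lemma SingularC.singularR_comp (h : SingularC f g) (hφ : DenseRange φ) (hf : Continuous f)
    (hg : Continuous g) : SingularR (f ∘ₗ (φ : D →ₗ[ℂ] A)) (g ∘ₗ (φ : D →ₗ[ℂ] A)) := by
  intro p p_rep p_pos p_le_f p_le_g
  obtain ⟨P, hP, rfl⟩ := p_rep.exists_continuous_comp_eq hφ hf p_le_f
  rw [h P (.of_comp hφ hP p_pos) (.of_comp hφ (hf.sub hP) p_le_f) (.of_comp hφ (hg.sub hP) p_le_g),
    LinearMap.zero_comp]

lemma IsLebDecompC.isLebDecompR_comp {fr fs : A →ₗ[ℂ] ℂ} (h : IsLebDecompC f g fr fs)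
    (hφ : DenseRange φ) (hg : Continuous g) :
    IsLebDecompR (f ∘ₗ (φ : D →ₗ[ℂ] A)) (g ∘ₗ (φ : D →ₗ[ℂ] A))
      (fr ∘ₗ (φ : D →ₗ[ℂ] A)) (fs ∘ₗ (φ : D →ₗ[ℂ] A)) := by
  obtain ⟨fr_pos, fs_pos, rfl, abs_cont, singular⟩ := h
  exact ⟨fr_pos.isRepresentable.comp hφ, fr_pos.isPosFn_comp φ, fs_pos.isRepresentable.comp hφ,
    fs_pos.isPosFn_comp φ, LinearMap.add_comp _ _ _, abs_cont.absContR_comp hφ,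
    singular.singularR_comp hφ fs_pos.continuous hg⟩

theorem cstar_lebesgue_unique_of_dense_subalgebra_general (hφ : DenseRange φ) (hg : IsPosFnC g)
    (hu : LebDecompUniqueForR (f ∘ₗ (φ : D →ₗ[ℂ] A)) (g ∘ₗ (φ : D →ₗ[ℂ] A))) :
    LebDecompUniqueForC f g := by
  intro fr fs fr' fs' h h'
  obtain ⟨regular_eq, singular_eq⟩ := hu _ _ _ _ (h.isLebDecompR_comp hφ hg.continuous)
    (h'.isLebDecompR_comp hφ hg.continuous)
  exact ⟨h.1.eq_of_comp_eq hφ h'.1 (congrArg DFunLike.coe regular_eq),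
    h.2.1.eq_of_comp_eq hφ h'.2.1 (congrArg DFunLike.coe singular_eq)⟩

end DenseHom

/-- **Corollary 2.21** (Corollary `vegsocor`): if `𝒟` is a dense `⋆`-subalgebra of a
C⋆-algebra `𝒜` and the Lebesgue decomposition of representable positive functionals over
`𝒟` is unique, then the Lebesgue decomposition of positive functionals over `𝒜` is
unique. -/
theorem cstar_lebesgue_unique_of_dense_subalgebra
    {A : Type} [NonUnitalCStarAlgebra A]
    (D : NonUnitalStarSubalgebra ℂ A) (hD : Dense (D : Set A))
    (hDu : LebDecompUniqueR ↥D) : LebDecompUniqueC A := by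
  intro f g hf hg
  have hι : DenseRange (NonUnitalStarSubalgebraClass.subtype D) := hD.denseRange_val
  exact cstar_lebesgue_unique_of_dense_subalgebra_general hι hg <|
    hDu _ _ (hf.isRepresentable.comp hι) (hf.isPosFn_comp _) (hg.isRepresentable.comp hι)
      (hg.isPosFn_comp _)
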